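/- Existence of the stationary distribution for all arrival probabilities: suppose in addition to the standing assumptions that there exist m ≥ 1 and ρ ∈ [0,1) such that d(g^{∘m}(P₁), g^{∘m}(P₂)) ≤ ρ·d(P₁,P₂) for all positive definite symmetric P₁, P₂, and that g and h are nonexpansive for d. Then for every arrival probability γ̄ ∈ (0,1), the Markov operator T(ν) = γ̄·g_*ν + (1−γ̄)·h_*ν on Borel probability measures on the set of real n×n positive definite symmetric matrices has a unique invariant probability measure μ (T(μ) = μ), and for every initial Borel probability measure ν, the iterates T^k(ν) converge weakly (with respect to the standard topology on real matrices) to μ. -/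

import Mathlib

open Matrix

noncomputable def matEigs {n : ℕ} (M : Matrix (Fin n) (Fin n) ℝ) : Fin n → ℝ := by
  classical exact if h : M.IsHermitian then h.eigenvalues else 0

/-- The positive semidefinite square root of a positive semidefinite matrix, as
Mathlib used to define it. -/
noncomputable def Matrix.PosSemidef.sqrt {n : Type*} [Fintype n] [DecidableEq n]
    {A : Matrix n n ℝ} (hA : A.PosSemidef) : Matrix n n ℝ :=
  (hA.1.eigenvectorUnitary : Matrix n n ℝ) *
    Matrix.diagonal ((RCLike.ofReal : ℝ → ℝ) ∘ Real.sqrt ∘ hA.1.eigenvalues) *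
    (star hA.1.eigenvectorUnitary : Matrix n n ℝ)

noncomputable def matSqrt {n : ℕ} (M : Matrix (Fin n) (Fin n) ℝ) :
    Matrix (Fin n) (Fin n) ℝ := by
  classical exact if h : M.PosSemidef then h.sqrt else 0

/-- The natural (Fisher / affine-invariant) distance on positive definite
matrices: `d(P₁,P₂) = (∑ᵢ (log λᵢ)²)^{1/2}` where `λᵢ` are the eigenvalues of
`P₂^{-1/2} P₁ P₂^{-1/2}`. -/
noncomputable def natDist {n : ℕ} (P₁ P₂ : Matrix (Fin n) (Fin n) ℝ) : ℝ :=
  Real.sqrt (∑ i : Fin n,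
    Real.log (matEigs ((matSqrt P₂)⁻¹ * P₁ * (matSqrt P₂)⁻¹) i) ^ 2)

open MeasureTheory Filter

/-- Time-update Riccati map `h(P) = A P Aᵀ + Q`. -/
def riccatiH {n : ℕ} (A Q P : Matrix (Fin n) (Fin n) ℝ) :
    Matrix (Fin n) (Fin n) ℝ := A * P * Aᵀ + Q

/-- Measurement-update Riccati map `g(P) = ((A P Aᵀ + Q)⁻¹ + 𝓘)⁻¹`. -/
noncomputable def riccatiG {n : ℕ} (A Q I P : Matrix (Fin n) (Fin n) ℝ) :
    Matrix (Fin n) (Fin n) ℝ := ((A * P * Aᵀ + Q)⁻¹ + I)⁻¹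

lemma posDef_conjTranspose_mul_mul {n : ℕ} {B P : Matrix (Fin n) (Fin n) ℝ}
    (hB : IsUnit B.det) (hP : P.PosDef) : (Bᴴ * P * B).PosDef := by
  refine Matrix.PosDef.of_dotProduct_mulVec_pos
    (Matrix.isHermitian_conjTranspose_mul_mul B hP.1) fun x hx => ?_
  have hinj : Function.Injective B.mulVec :=
    Matrix.mulVec_injective_iff_isUnit.mpr ((Matrix.isUnit_iff_isUnit_det _).mpr hB)
  have hx' : B.mulVec x ≠ 0 := by
    intro h
    exact hx (hinj (by simpa using h))
  simpa only [star_mulVec, Matrix.dotProduct_mulVec, Matrix.vecMul_vecMul]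
    using hP.dotProduct_mulVec_pos hx'

lemma posDef_mul_mul_transpose {n : ℕ} {A P : Matrix (Fin n) (Fin n) ℝ}
    (hA : IsUnit A.det) (hP : P.PosDef) : (A * P * Aᵀ).PosDef := by
  have hAe : (Aᵀ)ᴴ = A := by
    ext i j
    simp [Matrix.conjTranspose_apply]
  have h := posDef_conjTranspose_mul_mul
    (B := Aᵀ) (by simpa [Matrix.det_transpose] using hA) hP
  rwa [hAe] at h

lemma riccatiH_posDef {n : ℕ} {A Q P : Matrix (Fin n) (Fin n) ℝ}
    (hA : IsUnit A.det) (hQ : Q.PosSemidef) (hP : P.PosDef) :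
    (riccatiH A Q P).PosDef :=
  (posDef_mul_mul_transpose hA hP).add_posSemidef hQ

lemma riccatiG_posDef {n : ℕ} {A Q I P : Matrix (Fin n) (Fin n) ℝ}
    (hA : IsUnit A.det) (hQ : Q.PosSemidef) (hI : I.PosSemidef) (hP : P.PosDef) :
    (riccatiG A Q I P).PosDef :=
  (((riccatiH_posDef hA hQ hP).inv).add_posSemidef hI).inv

/-- The space of real `n×n` positive definite (symmetric) matrices, as a
subtype of the matrices, with the subspace topology. -/
abbrev PDMatrix (n : ℕ) := {P : Matrix (Fin n) (Fin n) ℝ // P.PosDef}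

noncomputable instance {n : ℕ} : MeasurableSpace (Matrix (Fin n) (Fin n) ℝ) :=
  borel _

instance {n : ℕ} : BorelSpace (Matrix (Fin n) (Fin n) ℝ) := ⟨rfl⟩

/-- The measurement-update map `g` as a self-map of positive definite matrices. -/
noncomputable def riccatiGPD {n : ℕ} (A Q I : Matrix (Fin n) (Fin n) ℝ)
    (hA : IsUnit A.det) (hQ : Q.PosSemidef) (hI : I.PosSemidef)
    (P : PDMatrix n) : PDMatrix n :=
  ⟨riccatiG A Q I P.1, riccatiG_posDef hA hQ hI P.2⟩

/-- The time-update map `h` as a self-map of positive definite matrices. -/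
def riccatiHPD {n : ℕ} (A Q : Matrix (Fin n) (Fin n) ℝ)
    (hA : IsUnit A.det) (hQ : Q.PosSemidef)
    (P : PDMatrix n) : PDMatrix n :=
  ⟨riccatiH A Q P.1, riccatiH_posDef hA hQ P.2⟩

/-- The Markov operator of the LGB iterated function system:
`T(ν) = γ̄·g_*ν + (1−γ̄)·h_*ν`. -/
noncomputable def lgbMarkovOp {n : ℕ} (A Q I : Matrix (Fin n) (Fin n) ℝ)
    (hA : IsUnit A.det) (hQ : Q.PosSemidef) (hI : I.PosSemidef) (γ : ℝ)
    (ν : Measure (PDMatrix n)) : Measure (PDMatrix n) :=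
  ENNReal.ofReal γ • ν.map (riccatiGPD A Q I hA hQ hI) +
    ENNReal.ofReal (1 - γ) • ν.map (riccatiHPD A Q hA hQ)

section AbstractIFS

variable {X : Type*}

noncomputable def ifsU (g h : X → X) (γ : ℝ) (φ : X → ℝ) : X → ℝ :=
  fun x => γ * φ (g x) + (1 - γ) * φ (h x)

noncomputable def ifsT [MeasurableSpace X] (g h : X → X) (γ : ℝ) (ν : Measure X) : Measure X :=
  ENNReal.ofReal γ • ν.map g + ENNReal.ofReal (1 - γ) • ν.map h

lemma ifsT_prob [MeasurableSpace X] {g h : X → X} (hg : Measurable g) (hh : Measurable h)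
    {γ : ℝ} (hγ : γ ∈ Set.Ioo (0 : ℝ) 1) (ν : Measure X) (hν : IsProbabilityMeasure ν) :
    IsProbabilityMeasure (ifsT g h γ ν) := by
  constructor
  simp only [ifsT, Measure.coe_add, Measure.coe_smul, Pi.add_apply, Pi.smul_apply, smul_eq_mul]
  rw [Measure.map_apply hg MeasurableSet.univ, Measure.map_apply hh MeasurableSet.univ]
  simp only [Set.preimage_univ, measure_univ, mul_one]
  rw [← ENNReal.ofReal_add hγ.1.le (by linarith [hγ.2])]
  simp

lemma ifsT_iter_prob [MeasurableSpace X] {g h : X → X} (hg : Measurable g) (hh : Measurable h)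
    {γ : ℝ} (hγ : γ ∈ Set.Ioo (0 : ℝ) 1) (k : ℕ) (ν : Measure X) (hν : IsProbabilityMeasure ν) :
    IsProbabilityMeasure ((ifsT g h γ)^[k] ν) := by
  induction k with
  | zero => simpa using hν
  | succ k ih =>
    rw [Function.iterate_succ_apply']
    exact ifsT_prob hg hh hγ _ ih

lemma ifsU_cont [TopologicalSpace X] {g h : X → X} (hg : Continuous g) (hh : Continuous h)
    (γ : ℝ) {φ : X → ℝ} (hφ : Continuous φ) : Continuous (ifsU g h γ φ) := by
  unfold ifsU; fun_prop

lemma ifsU_bdd {g h : X → X} {γ : ℝ} (hγ : γ ∈ Set.Ioo (0 : ℝ) 1) {φ : X → ℝ} {C : ℝ}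
    (hφ : ∀ x, |φ x| ≤ C) (x : X) : |ifsU g h γ φ x| ≤ C := by
  have h1 := abs_le.1 (hφ (g x)); have h2 := abs_le.1 (hφ (h x))
  have := hγ.1; have := hγ.2
  unfold ifsU
  rw [abs_le]; constructor <;> nlinarith

lemma ifsU_iter_cont [TopologicalSpace X] {g h : X → X} (hg : Continuous g) (hh : Continuous h)
    (γ : ℝ) {φ : X → ℝ} (hφ : Continuous φ) (k : ℕ) : Continuous ((ifsU g h γ)^[k] φ) := by
  induction k with
  | zero => simpa using hφ
  | succ k ih => rw [Function.iterate_succ_apply']; exact ifsU_cont hg hh γ ih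

lemma ifsU_iter_bdd {g h : X → X} {γ : ℝ} (hγ : γ ∈ Set.Ioo (0 : ℝ) 1) {φ : X → ℝ} {C : ℝ}
    (hφ : ∀ x, |φ x| ≤ C) (k : ℕ) : ∀ x, |(ifsU g h γ)^[k] φ x| ≤ C := by
  induction k with
  | zero => simpa using hφ
  | succ k ih => rw [Function.iterate_succ_apply']; exact ifsU_bdd hγ ih

lemma bdd_cont_integrable [TopologicalSpace X] [MeasurableSpace X] [OpensMeasurableSpace X]
    {φ : X → ℝ} (hc : Continuous φ) {C : ℝ} (hφ : ∀ x, |φ x| ≤ C) (ν : Measure X)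
    [IsFiniteMeasure ν] : Integrable φ ν :=
  Integrable.of_bound hc.measurable.aestronglyMeasurable C (Eventually.of_forall hφ)

lemma ifsT_integral [TopologicalSpace X] [MeasurableSpace X] [BorelSpace X]
    {g h : X → X} (hg : Continuous g) (hh : Continuous h)
    {γ : ℝ} (hγ : γ ∈ Set.Ioo (0 : ℝ) 1) {φ : X → ℝ} (hc : Continuous φ) {C : ℝ}
    (hφ : ∀ x, |φ x| ≤ C) (ν : Measure X) [IsProbabilityMeasure ν] :
    ∫ x, φ x ∂(ifsT g h γ ν) = ∫ x, ifsU g h γ φ x ∂ν := by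
  have i1 : Integrable (fun x => φ (g x)) ν :=
    bdd_cont_integrable (hc.comp hg) (fun x => hφ (g x)) ν
  have i2 : Integrable (fun x => φ (h x)) ν :=
    bdd_cont_integrable (hc.comp hh) (fun x => hφ (h x)) ν
  have m1 : IsProbabilityMeasure (ν.map g) := Measure.isProbabilityMeasure_map hg.aemeasurable
  have m2 : IsProbabilityMeasure (ν.map h) := Measure.isProbabilityMeasure_map hh.aemeasurable
  unfold ifsT ifsU
  rw [integral_add_measure, integral_smul_measure, integral_smul_measure,
    integral_map hg.aemeasurable hc.measurable.aestronglyMeasurable,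
    integral_map hh.aemeasurable hc.measurable.aestronglyMeasurable,
    integral_add (i1.const_mul _) (i2.const_mul _), integral_const_mul, integral_const_mul,
    ENNReal.toReal_ofReal hγ.1.le, ENNReal.toReal_ofReal (by linarith [hγ.2])]
  · simp
  · exact (bdd_cont_integrable hc hφ _).smul_measure ENNReal.ofReal_ne_top
  · exact (bdd_cont_integrable hc hφ _).smul_measure ENNReal.ofReal_ne_top

lemma ifsT_iter_integral [TopologicalSpace X] [MeasurableSpace X] [BorelSpace X]
    {g h : X → X} (hg : Continuous g) (hh : Continuous h)
    {γ : ℝ} (hγ : γ ∈ Set.Ioo (0 : ℝ) 1) {φ : X → ℝ} (hc : Continuous φ) {C : ℝ}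
    (hφ : ∀ x, |φ x| ≤ C) (k : ℕ) : ∀ (ν : Measure X) [IsProbabilityMeasure ν],
    ∫ x, φ x ∂((ifsT g h γ)^[k] ν) = ∫ x, (ifsU g h γ)^[k] φ x ∂ν := by
  induction k with
  | zero => intro ν _; simp
  | succ k ih =>
    intro ν hν
    have := ifsT_prob hg.measurable hh.measurable hγ ν hν
    rw [Function.iterate_succ_apply, ih, ifsT_integral hg hh hγ (ifsU_iter_cont hg hh γ hc k)
      (ifsU_iter_bdd hγ hφ k), Function.iterate_succ_apply']

lemma ifsU_lip {g h : X → X} {d : X → X → ℝ} {γ : ℝ} (hγ : γ ∈ Set.Ioo (0 : ℝ) 1)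
    (hgd : ∀ x y, d (g x) (g y) ≤ d x y) (hhd : ∀ x y, d (h x) (h y) ≤ d x y)
    {φ : X → ℝ} {L : ℝ} (hL : 0 ≤ L) (hφ : ∀ x y, |φ x - φ y| ≤ L * d x y) (x y : X) :
    |ifsU g h γ φ x - ifsU g h γ φ y| ≤ L * d x y := by
  have h1 := (hφ (g x) (g y)).trans (mul_le_mul_of_nonneg_left (hgd x y) hL)
  have h2 := (hφ (h x) (h y)).trans (mul_le_mul_of_nonneg_left (hhd x y) hL)
  rw [abs_le] at h1 h2 ⊢
  have := hγ.1; have := hγ.2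
  unfold ifsU
  constructor <;> nlinarith

lemma ifsU_iter_lip {g h : X → X} {d : X → X → ℝ} {γ : ℝ} (hγ : γ ∈ Set.Ioo (0 : ℝ) 1)
    (hgd : ∀ x y, d (g x) (g y) ≤ d x y) (hhd : ∀ x y, d (h x) (h y) ≤ d x y)
    {φ : X → ℝ} {L : ℝ} (hL : 0 ≤ L) (hφ : ∀ x y, |φ x - φ y| ≤ L * d x y) (k : ℕ) :
    ∀ x y, |(ifsU g h γ)^[k] φ x - (ifsU g h γ)^[k] φ y| ≤ L * d x y := by
  induction k with
  | zero => simpa using hφ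
  | succ k ih => rw [Function.iterate_succ_apply']; exact ifsU_lip hγ hgd hhd hL ih

lemma ifsU_iter_lip' {g h : X → X} {d : X → X → ℝ} {γ : ℝ} (hγ : γ ∈ Set.Ioo (0 : ℝ) 1)
    (hgd : ∀ x y, d (g x) (g y) ≤ d x y) (hhd : ∀ x y, d (h x) (h y) ≤ d x y)
    {φ : X → ℝ} {L : ℝ} (hL : 0 ≤ L) (hφ : ∀ x y, |φ x - φ y| ≤ L * d x y) (k : ℕ) :
    ∀ x y, |(ifsU g h γ)^[k] φ x - (ifsU g h γ)^[k] φ y| ≤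
      γ ^ k * |φ (g^[k] x) - φ (g^[k] y)| + (1 - γ ^ k) * (L * d x y) := by
  induction k with
  | zero => simp
  | succ k ih =>
    intro x y
    have h1 := ih (g x) (g y)
    have h2 := (ifsU_iter_lip hγ hgd hhd hL hφ k (h x) (h y)).trans
      (mul_le_mul_of_nonneg_left (hhd x y) hL)
    have h3 := mul_le_mul_of_nonneg_left (hgd x y) hL
    have h4 : 0 ≤ 1 - γ ^ k := sub_nonneg.2 (pow_le_one₀ hγ.1.le hγ.2.le)
    have h5 := h1.trans (add_le_add_right (mul_le_mul_of_nonneg_left h3 h4) _)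
    rw [Function.iterate_succ_apply', Function.iterate_succ_apply, Function.iterate_succ_apply]
    have h6 : ∀ a b c e : ℝ, |γ * a + (1 - γ) * b - (γ * c + (1 - γ) * e)| ≤
        γ * |a - c| + (1 - γ) * |b - e| := by
      intro a b c e
      have e1 : γ * a + (1 - γ) * b - (γ * c + (1 - γ) * e) = γ * (a - c) + (1 - γ) * (b - e) := by
        ring
      rw [e1]
      refine (abs_add_le _ _).trans ?_
      rw [abs_mul, abs_mul, abs_of_pos hγ.1, abs_of_pos (sub_pos.2 hγ.2)]
    refine (h6 _ _ _ _).trans ?_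
    have h7 := mul_le_mul_of_nonneg_left h5 hγ.1.le
    have h8 := mul_le_mul_of_nonneg_left h2 (sub_pos.2 hγ.2).le
    refine (add_le_add h7 h8).trans (le_of_eq ?_)
    ring

/-- Decay of Lipschitz constants. -/
lemma ifsU_decay {g h : X → X} {d : X → X → ℝ} {γ : ℝ} (hγ : γ ∈ Set.Ioo (0 : ℝ) 1)
    (hgd : ∀ x y, d (g x) (g y) ≤ d x y) (hhd : ∀ x y, d (h x) (h y) ≤ d x y)
    {m : ℕ} {ρ : ℝ} (hρ₀ : 0 ≤ ρ)
    (hc : ∀ x y, d (g^[m] x) (g^[m] y) ≤ ρ * d x y)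
    {φ : X → ℝ} {L : ℝ} (hL : 0 ≤ L) (hφ : ∀ x y, |φ x - φ y| ≤ L * d x y) (k : ℕ) :
    ∀ x y, |(ifsU g h γ)^[k] φ x - (ifsU g h γ)^[k] φ y| ≤
      (1 - γ ^ m * (1 - ρ)) ^ (k / m) * L * d x y := by
  have hp0 : 0 < γ ^ m := pow_pos hγ.1 m
  have hp1 : γ ^ m ≤ 1 := pow_le_one₀ hγ.1.le hγ.2.le
  have hq : 0 ≤ 1 - γ ^ m * (1 - ρ) := by nlinarith
  have key : ∀ j, ∀ x y, |(ifsU g h γ)^[m * j] φ x - (ifsU g h γ)^[m * j] φ y| ≤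
      (1 - γ ^ m * (1 - ρ)) ^ j * L * d x y := by
    intro j
    induction j with
    | zero => simpa using hφ
    | succ j ih =>
      intro x y
      have hL' : 0 ≤ (1 - γ ^ m * (1 - ρ)) ^ j * L := by positivity
      rw [Nat.mul_succ, add_comm, Function.iterate_add_apply]
      refine (ifsU_iter_lip' hγ hgd hhd hL' ih m x y).trans ?_
      have h1 := (ih (g^[m] x) (g^[m] y)).trans (mul_le_mul_of_nonneg_left (hc x y) hL')
      have h2 := mul_le_mul_of_nonneg_left h1 hp0.le
      refine (add_le_add_left h2 _).trans (le_of_eq ?_)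
      ring
  intro x y
  have hL' : 0 ≤ (1 - γ ^ m * (1 - ρ)) ^ (k / m) * L := by positivity
  have := ifsU_iter_lip hγ hgd hhd hL' (key (k / m)) (k % m) x y
  rwa [← Function.iterate_add_apply, Nat.mod_add_div] at this

lemma summable_pow_div {q : ℝ} (h0 : 0 ≤ q) (h1 : q < 1) {m : ℕ} (hm : 1 ≤ m) :
    Summable (fun k : ℕ => q ^ (k / m)) := by
  have : NeZero m := ⟨by omega⟩
  have h2 : Summable (fun p : ℕ × Fin m => q ^ p.1 * (1 : ℝ)) :=
    Summable.mul_of_nonneg (summable_geometric_of_lt_one h0 h1)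
      (Summable.of_finite (f := fun _ : Fin m => (1 : ℝ)))
      (fun i => pow_nonneg h0 i) (fun _ => zero_le_one)
  have h3 := (Nat.divModEquiv m).summable_iff.2 h2
  refine h3.congr fun k => ?_
  simp [Nat.divModEquiv]

theorem ifs_main [MetricSpace X] [ProperSpace X] [MeasurableSpace X] [BorelSpace X] (x₀ : X)
    {g h : X → X} (hg : Continuous g) (hh : Continuous h)
    {d : X → X → ℝ} (hdd : ∀ x y, dist x y ≤ d x y)
    {γ : ℝ} (hγ : γ ∈ Set.Ioo (0 : ℝ) 1)
    (hgd : ∀ x y, d (g x) (g y) ≤ d x y) (hhd : ∀ x y, d (h x) (h y) ≤ d x y)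
    {m : ℕ} (hm : 1 ≤ m) {ρ : ℝ} (hρ₀ : 0 ≤ ρ) (hρ₁ : ρ < 1)
    (hc : ∀ x y, d (g^[m] x) (g^[m] y) ≤ ρ * d x y) :
    ∃ μ : Measure X, IsProbabilityMeasure μ ∧ ifsT g h γ μ = μ ∧
      (∀ μ' : Measure X, IsProbabilityMeasure μ' → ifsT g h γ μ' = μ' → μ' = μ) ∧
      (∀ ν : Measure X, IsProbabilityMeasure ν →
        ∀ φ : BoundedContinuousFunction X ℝ,
          Tendsto (fun k : ℕ => ∫ x, φ x ∂((ifsT g h γ)^[k] ν))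
            atTop (nhds (∫ x, φ x ∂μ))) := by
  set q : ℝ := 1 - γ ^ m * (1 - ρ) with hqdef
  have hp0 : 0 < γ ^ m := pow_pos hγ.1 m
  have hp1 : γ ^ m ≤ 1 := pow_le_one₀ hγ.1.le hγ.2.le
  have hq0 : 0 ≤ q := by rw [hqdef]; nlinarith
  have hq1 : q < 1 := by rw [hqdef]; nlinarith
  have hsum := summable_pow_div hq0 hq1 hm
  have hd0 : ∀ x y, 0 ≤ d x y := fun x y => dist_nonneg.trans (hdd x y)
  set D : ℝ := d (g x₀) x₀ + d (h x₀) x₀ with hD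
  have hD0 : 0 ≤ D := add_nonneg (hd0 _ _) (hd0 _ _)
  -- one step differences
  have step : ∀ (φ : X → ℝ) (L : ℝ), 0 ≤ L → (∀ x y, |φ x - φ y| ≤ L * dist x y) → ∀ k,
      |(ifsU g h γ)^[k + 1] φ x₀ - (ifsU g h γ)^[k] φ x₀| ≤ q ^ (k / m) * (L * D) := by
    intro φ L hL hφ k
    have hφ' : ∀ x y, |φ x - φ y| ≤ L * d x y := fun x y =>
      (hφ x y).trans (mul_le_mul_of_nonneg_left (hdd x y) hL)
    have h1 := ifsU_decay hγ hgd hhd hρ₀ hc hL hφ' k (g x₀) x₀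
    have h2 := ifsU_decay hγ hgd hhd hρ₀ hc hL hφ' k (h x₀) x₀
    rw [← hqdef] at h1 h2
    have hL' : 0 ≤ q ^ (k / m) * L := by positivity
    have h3 : q ^ (k / m) * L * d (g x₀) x₀ ≤ q ^ (k / m) * (L * D) := by
      rw [← mul_assoc]; exact mul_le_mul_of_nonneg_left (by linarith [hd0 (h x₀) x₀]) hL'
    have h4 : q ^ (k / m) * L * d (h x₀) x₀ ≤ q ^ (k / m) * (L * D) := by
      rw [← mul_assoc]; exact mul_le_mul_of_nonneg_left (by linarith [hd0 (g x₀) x₀]) hL'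
    replace h1 := abs_le.1 (h1.trans h3)
    replace h2 := abs_le.1 (h2.trans h4)
    rw [Function.iterate_succ_apply']
    unfold ifsU at h1 h2 ⊢
    have := hγ.1; have := hγ.2
    rw [abs_le]
    constructor <;> nlinarith
  set S : ℝ := ∑' k : ℕ, q ^ (k / m) with hS
  have hS0 : 0 ≤ S := tsum_nonneg fun k => pow_nonneg hq0 _
  have total : ∀ (φ : X → ℝ) (L : ℝ), 0 ≤ L → (∀ x y, |φ x - φ y| ≤ L * dist x y) → ∀ k,
      |(ifsU g h γ)^[k] φ x₀ - φ x₀| ≤ S * (L * D) := by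
    intro φ L hL hφ k
    have h1 : |(ifsU g h γ)^[k] φ x₀ - φ x₀| ≤ ∑ i ∈ Finset.range k, q ^ (i / m) * (L * D) := by
      induction k with
      | zero => simp
      | succ k ih =>
        rw [Finset.sum_range_succ]
        have := step φ L hL hφ k
        calc _ ≤ _ := abs_sub_le _ ((ifsU g h γ)^[k] φ x₀) _
          _ ≤ _ := by linarith
    refine h1.trans ?_
    rw [← Finset.sum_mul]
    exact mul_le_mul_of_nonneg_right (hsum.sum_le_tsum _ fun i _ => pow_nonneg hq0 _) (by positivity)
  have cauchy : ∀ (φ : X → ℝ) (L : ℝ), 0 ≤ L → (∀ x y, |φ x - φ y| ≤ L * dist x y) →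
      ∃ l, Tendsto (fun k => (ifsU g h γ)^[k] φ x₀) atTop (nhds l) := by
    intro φ L hL hφ
    apply cauchySeq_tendsto_of_complete
    refine cauchySeq_of_dist_le_of_summable (fun k => q ^ (k / m) * (L * D)) (fun k => ?_)
      (hsum.mul_right _)
    rw [dist_comm, Real.dist_eq]
    exact step φ L hL hφ k
  -- the sequence of laws
  have hprob := fun k (ν : Measure X) (hν : IsProbabilityMeasure ν) =>
    ifsT_iter_prob hg.measurable hh.measurable hγ k ν hν
  let P : ℕ → ProbabilityMeasure X := fun k =>
    ⟨(ifsT g h γ)^[k] (Measure.dirac x₀), hprob k _ inferInstance⟩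
  have hP : ∀ (φ : X → ℝ), Continuous φ → ∀ C : ℝ, (∀ x, |φ x| ≤ C) → ∀ k,
      ∫ x, φ x ∂(P k : Measure X) = (ifsU g h γ)^[k] φ x₀ := by
    intro φ hcφ C hC k
    change ∫ x, φ x ∂((ifsT g h γ)^[k] (Measure.dirac x₀)) = _
    rw [ifsT_iter_integral hg hh hγ hcφ hC, integral_dirac]
  have tight : IsTightMeasureSet {((μ : ProbabilityMeasure X) : Measure X) | μ ∈ Set.range P} := by
    rw [isTightMeasureSet_iff_exists_isCompact_measure_compl_le]
    intro ε hε
    obtain ⟨e, he0, heε⟩ : ∃ e : ℝ, 0 < e ∧ ENNReal.ofReal e ≤ ε := by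
      obtain ⟨r, hr0, hr⟩ := ENNReal.lt_iff_exists_nnreal_btwn.1 hε
      exact ⟨r, by exact_mod_cast hr0, by simpa using hr.le⟩
    set R : ℝ := (S * D + 1) / e with hR
    have hR0 : 0 < R := by positivity
    refine ⟨Metric.closedBall x₀ R, isCompact_closedBall _ _, ?_⟩
    rintro _ ⟨_, ⟨k, rfl⟩, rfl⟩
    let ψ : X → ℝ := fun x => min (dist x x₀ / R) 1
    have hψc : Continuous ψ := by fun_prop
    have hψ0 : ∀ x, 0 ≤ ψ x := fun x => le_min (by positivity) zero_le_one
    have hψb : ∀ x, |ψ x| ≤ 1 := fun x => by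
      rw [abs_of_nonneg (hψ0 x)]; exact min_le_right _ _
    have hψL : ∀ x y, |ψ x - ψ y| ≤ R⁻¹ * dist x y := by
      intro x y
      refine (abs_min_sub_min_le_max _ _ _ _).trans ?_
      rw [sub_self, abs_zero, max_eq_left (abs_nonneg _), ← sub_div, abs_div, abs_of_pos hR0,
        div_eq_inv_mul]
      exact mul_le_mul_of_nonneg_left (abs_dist_sub_le _ _ _) (by positivity)
    have h1 := total ψ R⁻¹ (by positivity) hψL k
    have hψx : ψ x₀ = 0 := by simp [ψ]
    rw [hψx, sub_zero, ← hP ψ hψc 1 hψb k] at h1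
    have hSR : S * (R⁻¹ * D) ≤ e := by
      rw [hR]; rw [inv_div, div_mul_eq_mul_div, mul_div_assoc', div_le_iff₀ (by positivity)]
      nlinarith
    have h2 : ((P k : Measure X) (Metric.closedBall x₀ R)ᶜ).toReal ≤ e := by
      refine le_trans ?_ ((le_abs_self _).trans (h1.trans hSR))
      rw [← Measure.real, ← integral_indicator_one Metric.isClosed_closedBall.measurableSet.compl]
      refine integral_mono_of_nonneg (Eventually.of_forall fun x => ?_)
        (bdd_cont_integrable hψc hψb _) (Eventually.of_forall fun x => ?_)
      · exact Set.indicator_nonneg (fun _ _ => zero_le_one) x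
      · by_cases hx : x ∈ (Metric.closedBall x₀ R)ᶜ
        · rw [Set.indicator_of_mem hx]
          have hx' : R < dist x x₀ := by simpa using hx
          exact le_min ((one_le_div hR0).2 hx'.le) le_rfl
        · rw [Set.indicator_of_notMem hx]
          exact hψ0 x
    refine le_trans ?_ heε
    rw [← ENNReal.ofReal_toReal (measure_ne_top (P k : Measure X) _)]
    exact ENNReal.ofReal_le_ofReal h2
  have hcomp := isCompact_closure_of_isTightMeasureSet tight
  obtain ⟨μ, -, hμ⟩ := hcomp.exists_mapClusterPt (f := atTop) (u := P)
    (by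
      simp only [le_principal_iff, mem_map]
      exact Eventually.of_forall fun k => subset_closure ⟨k, rfl⟩)
  -- limits
  have lim1 : ∀ (φ : X → ℝ) (L : ℝ), 0 ≤ L → (∀ x y, |φ x - φ y| ≤ L * dist x y) →
      Continuous φ → ∀ C : ℝ, (∀ x, |φ x| ≤ C) →
      Tendsto (fun k => (ifsU g h γ)^[k] φ x₀) atTop (nhds (∫ x, φ x ∂(μ : Measure X))) := by
    intro φ L hL hφ hcφ C hC
    obtain ⟨l, hl⟩ := cauchy φ L hL hφ
    let φ' : BoundedContinuousFunction X ℝ := BoundedContinuousFunction.ofNormedAddCommGroup φ hcφ C hC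
    have hcont : Continuous (fun ν : ProbabilityMeasure X => ∫ x, φ' x ∂(ν : Measure X)) :=
      ProbabilityMeasure.continuous_integral_boundedContinuousFunction φ'
    have h1 : MapClusterPt (∫ x, φ' x ∂(μ : Measure X)) atTop
        ((fun ν : ProbabilityMeasure X => ∫ x, φ' x ∂(ν : Measure X)) ∘ P) :=
      hμ.continuousAt_comp hcont.continuousAt
    have h2 : ((fun ν : ProbabilityMeasure X => ∫ x, φ' x ∂(ν : Measure X)) ∘ P) =
        fun k => (ifsU g h γ)^[k] φ x₀ := by
      funext k; exact hP φ hcφ C hC k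
    rw [h2] at h1
    have h3 : (∫ x, φ' x ∂(μ : Measure X)) = l := by
      have := h1.neBot
      exact eq_of_nhds_neBot (h1.neBot.mono (inf_le_inf_left _ hl))
    change Tendsto _ _ (nhds (∫ x, φ' x ∂(μ : Measure X)))
    rw [h3]; exact hl
  have lim2 : ∀ (ν : Measure X) (hν : IsProbabilityMeasure ν),
      Tendsto (β := ProbabilityMeasure X)
        (fun k => ⟨(ifsT g h γ)^[k] ν, hprob k ν hν⟩) atTop
        (nhds μ) := by
    intro ν hν
    refine tendsto_iff_forall_lipschitz_integral_tendsto.2 ?_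
    rintro φ ⟨C, hC⟩ ⟨L, hL⟩
    have hcφ := hL.continuous
    have hφL : ∀ x y, |φ x - φ y| ≤ L * dist x y := fun x y => by
      have := hL.dist_le_mul x y; rwa [Real.dist_eq] at this
    have hφd : ∀ x y, |φ x - φ y| ≤ L * d x y := fun x y =>
      (hφL x y).trans (mul_le_mul_of_nonneg_left (hdd x y) L.2)
    have hφb : ∀ x, |φ x| ≤ C + |φ x₀| := fun x => by
      have h1 := hC x x₀
      rw [Real.dist_eq] at h1
      have h2 := abs_sub_abs_le_abs_sub (φ x) (φ x₀)
      linarith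
    have h1 := lim1 φ L L.2 hφL hcφ _ hφb
    have h2 : Tendsto (fun k => ∫ x, ((ifsU g h γ)^[k] φ x - (ifsU g h γ)^[k] φ x₀) ∂ν) atTop
        (nhds (∫ x, (0 : ℝ) ∂ν)) := by
      refine tendsto_integral_of_dominated_convergence (fun _ => 2 * (C + |φ x₀|)) ?_ ?_ ?_ ?_
      · intro k
        exact ((ifsU_iter_cont hg hh γ hcφ k).sub continuous_const).measurable.aestronglyMeasurable
      · exact integrable_const _
      · intro k
        refine Eventually.of_forall fun x => ?_
        have a1 := ifsU_iter_bdd (g := g) (h := h) hγ hφb k x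
        have a2 := ifsU_iter_bdd (g := g) (h := h) hγ hφb k x₀
        rw [Real.norm_eq_abs]
        have := abs_sub ((ifsU g h γ)^[k] φ x) ((ifsU g h γ)^[k] φ x₀)
        linarith
      · refine Eventually.of_forall fun x => ?_
        have a3 : Tendsto (fun k : ℕ => q ^ (k / m) * L * d x x₀) atTop (nhds 0) := by
          have := (hsum.tendsto_atTop_zero.mul_const (L : ℝ)).mul_const (d x x₀)
          simpa using this
        exact squeeze_zero_norm (fun k => ifsU_decay hγ hgd hhd hρ₀ hc L.2 hφd k x x₀) a3
    have h3 := h2.add h1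
    simp only [integral_zero, zero_add] at h3
    refine h3.congr fun k => ?_
    have i1 := bdd_cont_integrable (ifsU_iter_cont hg hh γ hcφ k) (ifsU_iter_bdd hγ hφb k) ν
    rw [integral_sub i1 (integrable_const _)]
    change _ = ∫ x, φ x ∂((ifsT g h γ)^[k] ν)
    rw [ifsT_iter_integral hg hh hγ hcφ hφb]
    simp
  have lim3 : ∀ ν : Measure X, IsProbabilityMeasure ν →
        ∀ φ : BoundedContinuousFunction X ℝ,
          Tendsto (fun k : ℕ => ∫ x, φ x ∂((ifsT g h γ)^[k] ν))
            atTop (nhds (∫ x, φ x ∂(μ : Measure X))) := by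
    intro ν hν φ
    exact (ProbabilityMeasure.tendsto_iff_forall_integral_tendsto.1 (lim2 ν hν)) φ
  have uniq : ∀ μ₁ μ₂ : Measure X, IsProbabilityMeasure μ₁ → IsProbabilityMeasure μ₂ →
      (∀ φ : BoundedContinuousFunction X ℝ, ∫ x, φ x ∂μ₁ = ∫ x, φ x ∂μ₂) → μ₁ = μ₂ := by
    intro μ₁ μ₂ _ _ hh
    exact ext_of_forall_integral_eq_of_IsFiniteMeasure hh
  refine ⟨μ, inferInstance, ?_, ?_, lim3⟩
  · refine uniq _ _ (ifsT_prob hg.measurable hh.measurable hγ _ inferInstance) inferInstance ?_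
    intro φ
    have hb : ∀ x, |φ x| ≤ ‖φ‖ := fun x => φ.norm_coe_le_norm x
    let φ' : BoundedContinuousFunction X ℝ := BoundedContinuousFunction.ofNormedAddCommGroup
      (ifsU g h γ φ) (ifsU_cont hg hh γ φ.continuous) ‖φ‖ (ifsU_bdd hγ hb)
    have h1 := lim3 μ inferInstance φ'
    have h2 := (tendsto_add_atTop_iff_nat 1).2 (lim3 μ inferInstance φ)
    rw [ifsT_integral hg hh hγ φ.continuous hb]
    refine tendsto_nhds_unique h1 (h2.congr fun k => ?_)
    have := hprob k (μ : Measure X) inferInstance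
    rw [Function.iterate_succ_apply', ifsT_integral hg hh hγ φ.continuous hb]
    rfl
  · intro μ' hμ' hfix
    refine uniq _ _ hμ' inferInstance fun φ => ?_
    have h1 := lim3 μ' hμ' φ
    have h2 : ∀ k, (ifsT g h γ)^[k] μ' = μ' := fun k => Function.iterate_fixed hfix k
    simp only [h2] at h1
    exact tendsto_nhds_unique tendsto_const_nhds h1

end AbstractIFS

section MatrixPart

lemma matSqrt_spec {n : ℕ} {R : Matrix (Fin n) (Fin n) ℝ} (hR : R.PosDef) :
    (matSqrt R)ᵀ = matSqrt R ∧ matSqrt R * matSqrt R = R := by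
  have hR' := hR.posSemidef
  have e : matSqrt R = hR'.sqrt := by
    unfold matSqrt; rw [dif_pos hR']
  rw [e]
  unfold Matrix.PosSemidef.sqrt
  set V : Matrix (Fin n) (Fin n) ℝ := (hR'.1.eigenvectorUnitary : Matrix (Fin n) (Fin n) ℝ) with hV
  have hVV : star V * V = 1 := Unitary.coe_star_mul_self hR'.1.eigenvectorUnitary
  have hst : star V = Vᵀ := by
    rw [Matrix.star_eq_conjTranspose, Matrix.conjTranspose_eq_transpose_of_trivial]
  constructor
  · rw [hst, Matrix.transpose_mul, Matrix.transpose_mul, Matrix.transpose_transpose,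
      Matrix.diagonal_transpose, Matrix.mul_assoc]
  · have hs : R = V * Matrix.diagonal (hR'.1.eigenvalues) * star V := by
      have := hR'.1.spectral_theorem
      rw [Unitary.conjStarAlgAut_apply] at this
      exact this
    conv_rhs => rw [hs]
    set E : Matrix (Fin n) (Fin n) ℝ :=
      Matrix.diagonal ((RCLike.ofReal : ℝ → ℝ) ∘ Real.sqrt ∘ hR'.1.eigenvalues) with hE
    have hEE : E * E = Matrix.diagonal (hR'.1.eigenvalues) := by
      rw [hE, Matrix.diagonal_mul_diagonal]
      congr 1
      funext i
      simp [Real.mul_self_sqrt (hR'.eigenvalues_nonneg i)]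
    calc V * E * star V * (V * E * star V) = V * E * (star V * V) * E * star V := by
          simp only [Matrix.mul_assoc]
      _ = V * (E * E) * star V := by rw [hVV]; simp only [Matrix.mul_assoc, Matrix.one_mul]
      _ = _ := by rw [hEE]

lemma quad_bound {n : ℕ} {M : Matrix (Fin n) (Fin n) ℝ} (hM : M.IsHermitian) {a b : ℝ}
    (h : ∀ i, a ≤ hM.eigenvalues i ∧ hM.eigenvalues i ≤ b) (y : Fin n → ℝ) :
    a * (y ⬝ᵥ y) ≤ y ⬝ᵥ M *ᵥ y ∧ y ⬝ᵥ M *ᵥ y ≤ b * (y ⬝ᵥ y) := by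
  set V : Matrix (Fin n) (Fin n) ℝ := (hM.eigenvectorUnitary : Matrix (Fin n) (Fin n) ℝ) with hV
  have hVV : V * star V = 1 := Unitary.coe_mul_star_self hM.eigenvectorUnitary
  have hst : star V = Vᵀ := by
    rw [Matrix.star_eq_conjTranspose, Matrix.conjTranspose_eq_transpose_of_trivial]
  have hs : M = V * Matrix.diagonal (hM.eigenvalues) * star V := by
    have := hM.spectral_theorem
    rw [Unitary.conjStarAlgAut_apply] at this
    exact this
  rw [hst] at hs hVV
  set z : Fin n → ℝ := Vᵀ *ᵥ y with hz
  have h1 : y ⬝ᵥ M *ᵥ y = ∑ i, hM.eigenvalues i * (z i * z i) := by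
    conv_lhs => rw [hs]
    rw [← Matrix.mulVec_mulVec, ← Matrix.mulVec_mulVec, Matrix.dotProduct_mulVec,
      ← Matrix.mulVec_transpose, ← hz]
    simp only [dotProduct, Matrix.mulVec_diagonal]
    exact Finset.sum_congr rfl fun i _ => by ring
  have h2 : y ⬝ᵥ y = ∑ i, z i * z i := by
    have : z ⬝ᵥ z = y ⬝ᵥ y := by
      rw [hz, Matrix.dotProduct_mulVec, ← Matrix.mulVec_transpose, Matrix.transpose_transpose,
        Matrix.mulVec_mulVec, hVV, Matrix.one_mulVec]
    rw [← this]; rfl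
  rw [h1, h2, Finset.mul_sum, Finset.mul_sum]
  exact ⟨Finset.sum_le_sum fun i _ => mul_le_mul_of_nonneg_right (h i).1 (mul_self_nonneg _),
    Finset.sum_le_sum fun i _ => mul_le_mul_of_nonneg_right (h i).2 (mul_self_nonneg _)⟩

lemma quad_pos {n : ℕ} {P : Matrix (Fin n) (Fin n) ℝ} (hP : P.PosDef) {x : Fin n → ℝ}
    (hx : x ≠ 0) : 0 < x ⬝ᵥ P *ᵥ x := by
  simpa using hP.dotProduct_mulVec_pos hx

lemma log_quad_le_natDist {n : ℕ} {P R : Matrix (Fin n) (Fin n) ℝ} (hP : P.PosDef)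
    (hR : R.PosDef) {x : Fin n → ℝ} (hx : x ≠ 0) :
    |Real.log (x ⬝ᵥ P *ᵥ x) - Real.log (x ⬝ᵥ R *ᵥ x)| ≤ natDist P R := by
  obtain ⟨hS1, hS2⟩ := matSqrt_spec hR
  set S := matSqrt R with hS
  have hSdet : IsUnit S.det := by
    have h1 : S.det * S.det = R.det := by rw [← Matrix.det_mul, hS2]
    have h2 := hR.det_pos
    exact isUnit_iff_ne_zero.2 fun h0 => by rw [h0] at h1; simp at h1; linarith
  have hSi : (S⁻¹)ᴴ = S⁻¹ := by
    rw [Matrix.conjTranspose_eq_transpose_of_trivial, Matrix.transpose_nonsing_inv, hS1]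
  have hM : (S⁻¹ * P * S⁻¹).PosDef := by
    have := posDef_conjTranspose_mul_mul (B := S⁻¹) (P := P)
      (Matrix.isUnit_nonsing_inv_det S hSdet) hP
    rwa [hSi] at this
  set M := S⁻¹ * P * S⁻¹ with hMdef
  have hnd : natDist P R = Real.sqrt (∑ i, Real.log (hM.1.eigenvalues i) ^ 2) := by
    unfold natDist
    rw [← hS, ← hMdef]
    unfold matEigs
    rw [dif_pos hM.1]
  set t := natDist P R with ht
  have hlog : ∀ i, |Real.log (hM.1.eigenvalues i)| ≤ t := by
    intro i
    rw [hnd]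
    apply Real.abs_le_sqrt
    exact Finset.single_le_sum (f := fun i => Real.log (hM.1.eigenvalues i) ^ 2)
      (fun j _ => sq_nonneg _) (Finset.mem_univ i)
  have hb : ∀ i, Real.exp (-t) ≤ hM.1.eigenvalues i ∧ hM.1.eigenvalues i ≤ Real.exp t := by
    intro i
    have h1 := abs_le.1 (hlog i)
    exact ⟨(Real.le_log_iff_exp_le (hM.eigenvalues_pos i)).1 h1.1,
      (Real.log_le_iff_le_exp (hM.eigenvalues_pos i)).1 h1.2⟩
  have hq := quad_bound hM.1 hb (S *ᵥ x)
  have e1 : (S *ᵥ x) ⬝ᵥ (S *ᵥ x) = x ⬝ᵥ R *ᵥ x := by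
    rw [Matrix.dotProduct_mulVec, ← Matrix.mulVec_transpose, hS1, Matrix.mulVec_mulVec, hS2,
      dotProduct_comm]
  have e2 : (S *ᵥ x) ⬝ᵥ M *ᵥ (S *ᵥ x) = x ⬝ᵥ P *ᵥ x := by
    have : S * M * S = P := by
      rw [hMdef]
      calc S * (S⁻¹ * P * S⁻¹) * S = (S * S⁻¹) * P * (S⁻¹ * S) := by
            simp only [Matrix.mul_assoc]
        _ = P := by
          rw [Matrix.mul_nonsing_inv _ hSdet, Matrix.nonsing_inv_mul _ hSdet, Matrix.one_mul,
            Matrix.mul_one]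
    conv_rhs => rw [← this]
    have h5 : (S * M * S) *ᵥ x = S *ᵥ (M *ᵥ (S *ᵥ x)) := by
      rw [Matrix.mulVec_mulVec, Matrix.mulVec_mulVec, Matrix.mul_assoc]
    rw [h5, Matrix.dotProduct_mulVec x S, ← Matrix.mulVec_transpose, hS1]
  rw [e1, e2] at hq
  have p1 := quad_pos hP hx
  have p2 := quad_pos hR hx
  have l1 := Real.log_le_log (by positivity) hq.1
  have l2 := Real.log_le_log p1 hq.2
  rw [Real.log_mul (Real.exp_pos _).ne' p2.ne', Real.log_exp] at l1 l2
  rw [abs_le]; constructor <;> linarith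

/-- The compact annulus of test vectors. -/
abbrev annul (n : ℕ) := {x : Fin n → ℝ // x ∈ Metric.closedBall (0 : Fin n → ℝ) 2 \ Metric.ball 0 1}

instance annul_compact (n : ℕ) : CompactSpace (annul n) :=
  isCompact_iff_compactSpace.1 ((isCompact_closedBall _ _).diff Metric.isOpen_ball)

lemma annul_ne {n : ℕ} (x : annul n) : x.1 ≠ 0 := by
  intro h
  have := x.2.2
  rw [h] at this
  simp at this

lemma mem_annul_single {n : ℕ} (i : Fin n) :
    (Pi.single i 1 : Fin n → ℝ) ∈ Metric.closedBall (0 : Fin n → ℝ) 2 \ Metric.ball 0 1 := by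
  have : ‖(Pi.single i 1 : Fin n → ℝ)‖ = 1 := by rw [Pi.norm_single]; simp
  simp [this]

lemma mem_annul_add {n : ℕ} (i j : Fin n) :
    (Pi.single i 1 + Pi.single j 1 : Fin n → ℝ) ∈
      Metric.closedBall (0 : Fin n → ℝ) 2 \ Metric.ball 0 1 := by
  have h1 : ∀ k, ‖(Pi.single k 1 : Fin n → ℝ)‖ = 1 := by intro k; rw [Pi.norm_single]; simp
  have h2 := norm_add_le (Pi.single i 1 : Fin n → ℝ) (Pi.single j 1)
  have h3 := norm_le_pi_norm (Pi.single i 1 + Pi.single j 1 : Fin n → ℝ) i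
  rw [h1, h1] at h2
  have h4 : (1 : ℝ) ≤ ‖(Pi.single i 1 + Pi.single j 1 : Fin n → ℝ) i‖ := by
    have h5 : (0 : ℝ) ≤ (Pi.single j 1 : Fin n → ℝ) i := by
      by_cases h : i = j
      · subst h; simp
      · simp [h]
    simp only [Pi.add_apply, Pi.single_eq_same, Real.norm_eq_abs]
    rw [abs_of_nonneg (by linarith)]; linarith
  simp only [Set.mem_sdiff, Metric.mem_closedBall, dist_zero_right, Metric.mem_ball, not_lt]
  constructor <;> linarith

lemma polar {n : ℕ} {M : Matrix (Fin n) (Fin n) ℝ} (hM : Mᵀ = M) (i j : Fin n) :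
    M i j = ((Pi.single i 1 + Pi.single j 1) ⬝ᵥ M *ᵥ (Pi.single i 1 + Pi.single j 1) -
      Pi.single i 1 ⬝ᵥ M *ᵥ Pi.single i 1 - Pi.single j 1 ⬝ᵥ M *ᵥ Pi.single j 1) / 2 := by
  have : M j i = M i j := congrFun (congrFun hM i) j
  simp [Matrix.mulVec_add, add_dotProduct, dotProduct_add, this]
  ring

lemma continuous_quad {n : ℕ} :
    Continuous (fun p : Matrix (Fin n) (Fin n) ℝ × (Fin n → ℝ) => p.2 ⬝ᵥ p.1 *ᵥ p.2) := by
  fun_prop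

noncomputable def logQuad {n : ℕ} (P : PDMatrix n) : C(annul n, ℝ) where
  toFun x := Real.log (x.1 ⬝ᵥ P.1 *ᵥ x.1)
  continuous_toFun := by
    refine Continuous.log ?_ fun x => (quad_pos P.2 (annul_ne x)).ne'
    exact continuous_quad.comp (continuous_const.prodMk continuous_subtype_val)

lemma continuous_logQuad {n : ℕ} : Continuous (logQuad (n := n)) := by
  apply ContinuousMap.continuous_of_continuous_uncurry
  refine Continuous.log (f := fun p : PDMatrix n × annul n => p.2.1 ⬝ᵥ p.1.1 *ᵥ p.2.1) ?_
    fun p => (quad_pos p.1.2 (annul_ne p.2)).ne'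
  exact continuous_quad.comp ((continuous_subtype_val.comp continuous_fst).prodMk
    (continuous_subtype_val.comp continuous_snd))

lemma symm_of_posDef {n : ℕ} {P : Matrix (Fin n) (Fin n) ℝ} (hP : P.PosDef) : Pᵀ = P := by
  have := hP.1
  rwa [Matrix.IsHermitian, Matrix.conjTranspose_eq_transpose_of_trivial] at this

lemma embedding_logQuad {n : ℕ} : Topology.IsEmbedding (logQuad (n := n)) := by
  let f : C(annul n, ℝ) → Matrix (Fin n) (Fin n) ℝ := fun F i j =>
    (Real.exp (F ⟨_, mem_annul_add i j⟩) - Real.exp (F ⟨_, mem_annul_single i⟩) -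
      Real.exp (F ⟨_, mem_annul_single j⟩)) / 2
  have hf : Continuous f := by
    refine continuous_pi fun i => continuous_pi fun j => ?_
    have := fun x : annul n => continuous_eval_const (F := C(annul n, ℝ)) x
    fun_prop
  have hcomp : f ∘ logQuad (n := n) = Subtype.val := by
    funext P
    ext i j
    have h := fun x : annul n => Real.exp_log (quad_pos P.2 (annul_ne x))
    simp only [Function.comp, f, logQuad, ContinuousMap.coe_mk]
    rw [h ⟨_, mem_annul_add i j⟩, h ⟨_, mem_annul_single i⟩, h ⟨_, mem_annul_single j⟩]
    exact (polar (symm_of_posDef P.2) i j).symm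
  refine Topology.IsEmbedding.of_comp continuous_logQuad hf ?_
  rw [hcomp]
  exact Topology.IsEmbedding.subtypeVal

lemma compact_ball {n : ℕ} (P₀ : PDMatrix n) (r : ℝ) :
    IsCompact {P : PDMatrix n | ∀ x : annul n, |logQuad P x - logQuad P₀ x| ≤ r} := by
  have hind : Topology.IsInducing (Subtype.val : PDMatrix n → Matrix (Fin n) (Fin n) ℝ) := ⟨rfl⟩
  refine hind.isCompact_iff.2 ?_
  let q₀ : (Fin n → ℝ) → ℝ := fun x => x ⬝ᵥ P₀.1 *ᵥ x
  let B : Set (Matrix (Fin n) (Fin n) ℝ) := {M | Mᵀ = M ∧ ∀ x : annul n,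
    Real.exp (-r) * q₀ x.1 ≤ x.1 ⬝ᵥ M *ᵥ x.1 ∧ x.1 ⬝ᵥ M *ᵥ x.1 ≤ Real.exp r * q₀ x.1}
  have hB : Subtype.val '' {P : PDMatrix n | ∀ x : annul n, |logQuad P x - logQuad P₀ x| ≤ r}
      = B := by
    ext M
    constructor
    · rintro ⟨P, hP, rfl⟩
      refine ⟨symm_of_posDef P.2, fun x => ?_⟩
      have h1 := abs_le.1 (hP x)
      have p1 := quad_pos P.2 (annul_ne x)
      have p2 := quad_pos P₀.2 (annul_ne x)
      simp only [logQuad, ContinuousMap.coe_mk] at h1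
      simp only [q₀]
      constructor
      · rw [← Real.exp_log p1, ← Real.exp_log p2, ← Real.exp_add]
        exact Real.exp_le_exp.2 (by linarith)
      · rw [← Real.exp_log p1, ← Real.exp_log p2, ← Real.exp_add]
        exact Real.exp_le_exp.2 (by linarith)
    · rintro ⟨hs, hq⟩
      have hpd : M.PosDef := by
        refine Matrix.PosDef.of_dotProduct_mulVec_pos ?_ fun x hx => ?_
        · rwa [Matrix.IsHermitian, Matrix.conjTranspose_eq_transpose_of_trivial]
        · have hx0 : 0 < ‖x‖ := norm_pos_iff.2 hx
          have hy : ‖‖x‖⁻¹ • x‖ = 1 := by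
            rw [norm_smul, norm_inv, norm_norm, inv_mul_cancel₀ hx0.ne']
          have h1 := (hq ⟨‖x‖⁻¹ • x, by simp [hy]⟩).1
          have p2 := quad_pos P₀.2 (annul_ne ⟨‖x‖⁻¹ • x, by simp [hy]⟩)
          have h2 : 0 < (‖x‖⁻¹ • x) ⬝ᵥ M *ᵥ (‖x‖⁻¹ • x) :=
            lt_of_lt_of_le (mul_pos (Real.exp_pos _) p2) h1
          rw [Matrix.mulVec_smul, smul_dotProduct, dotProduct_smul, smul_eq_mul, smul_eq_mul] at h2
          have h3 := pos_of_mul_pos_right h2 (by positivity)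
          have h4 := pos_of_mul_pos_right h3 (by positivity)
          simpa using h4
      refine ⟨⟨M, hpd⟩, fun x => ?_, rfl⟩
      have p1 := quad_pos hpd (annul_ne x)
      have p2 := quad_pos P₀.2 (annul_ne x)
      have l1 := Real.log_le_log (mul_pos (Real.exp_pos _) p2) (hq x).1
      have l2 := Real.log_le_log p1 (hq x).2
      simp only [q₀] at l1 l2
      rw [Real.log_mul (Real.exp_pos _).ne' p2.ne', Real.log_exp] at l1 l2
      simp only [logQuad, ContinuousMap.coe_mk]
      rw [abs_le]; constructor <;> linarith
  rw [hB]
  have hclosed : IsClosed B := by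
    have hc : ∀ x : Fin n → ℝ, Continuous fun M : Matrix (Fin n) (Fin n) ℝ => x ⬝ᵥ M *ᵥ x :=
      fun x => continuous_quad.comp (continuous_id.prodMk continuous_const)
    have hBeq : B = {M | Mᵀ = M} ∩ ⋂ x : annul n,
        ({M | Real.exp (-r) * q₀ x.1 ≤ x.1 ⬝ᵥ M *ᵥ x.1} ∩
          {M | x.1 ⬝ᵥ M *ᵥ x.1 ≤ Real.exp r * q₀ x.1}) := by
      ext M; simp only [B, Set.mem_ofPred_eq, Set.mem_inter_iff, Set.mem_iInter]
    rw [hBeq]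
    refine (isClosed_eq continuous_id.matrix_transpose continuous_id).inter
      (isClosed_iInter fun x => (isClosed_le continuous_const (hc _)).inter
        (isClosed_le (hc _) continuous_const))
  let b : Fin n → Fin n → ℝ := fun i j => Real.exp r * (q₀ (Pi.single i 1 + Pi.single j 1) +
    q₀ (Pi.single i 1) + q₀ (Pi.single j 1))
  have hcpt : IsCompact (Set.pi Set.univ fun i : Fin n => Set.pi Set.univ fun j : Fin n =>
      Set.Icc (-b i j) (b i j)) :=
    isCompact_univ_pi fun i => isCompact_univ_pi fun j => isCompact_Icc
  refine IsCompact.of_isClosed_subset (X := Matrix (Fin n) (Fin n) ℝ) hcpt hclosed ?_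
  rintro M ⟨hs, hq⟩ i - j -
  have h1 := hq ⟨_, mem_annul_add i j⟩
  have h2 := hq ⟨_, mem_annul_single i⟩
  have h3 := hq ⟨_, mem_annul_single j⟩
  have p1 := mul_pos (Real.exp_pos (-r)) (quad_pos P₀.2 (annul_ne ⟨_, mem_annul_add i j⟩))
  have p2 := mul_pos (Real.exp_pos (-r)) (quad_pos P₀.2 (annul_ne ⟨_, mem_annul_single i⟩))
  have p3 := mul_pos (Real.exp_pos (-r)) (quad_pos P₀.2 (annul_ne ⟨_, mem_annul_single j⟩))
  have hp := polar hs i j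
  simp only [q₀] at h1 h2 h3
  change M i j ∈ Set.Icc (-b i j) (b i j)
  simp only [b, q₀, Set.mem_Icc]
  simp only [mul_add]
  rw [hp]
  constructor <;> linarith

lemma continuous_riccatiHPD {n : ℕ} (A Q : Matrix (Fin n) (Fin n) ℝ)
    (hA : IsUnit A.det) (hQ : Q.PosSemidef) : Continuous (riccatiHPD A Q hA hQ) := by
  refine Continuous.subtype_mk ?_ _
  unfold riccatiH
  fun_prop

lemma continuous_inv_pd {n : ℕ} {X : Type*} [TopologicalSpace X]
    {f : X → Matrix (Fin n) (Fin n) ℝ} (hf : Continuous f) (hp : ∀ x, (f x).PosDef) :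
    Continuous fun x => (f x)⁻¹ := by
  rw [continuous_iff_continuousAt]
  intro x
  have h1 : ContinuousAt Ring.inverse (f x).det := by
    have : (Ring.inverse : ℝ → ℝ) = fun y => y⁻¹ := by funext y; simp
    rw [this]
    exact continuousAt_inv₀ (hp x).det_pos.ne'
  exact ContinuousAt.comp (f := f) (continuousAt_matrix_inv (f x) h1) hf.continuousAt

lemma continuous_riccatiGPD {n : ℕ} (A Q I : Matrix (Fin n) (Fin n) ℝ)
    (hA : IsUnit A.det) (hQ : Q.PosSemidef) (hI : I.PosSemidef) :
    Continuous (riccatiGPD A Q I hA hQ hI) := by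
  refine Continuous.subtype_mk ?_ _
  unfold riccatiG
  have h1 : Continuous fun P : PDMatrix n => A * P.1 * Aᵀ + Q := by fun_prop
  exact continuous_inv_pd ((continuous_inv_pd h1 fun P => riccatiH_posDef hA hQ P.2).add
    continuous_const) fun P => ((riccatiH_posDef hA hQ P.2).inv).add_posSemidef hI

end MatrixPart

/-- If some iterate `g^{∘m}` (`m ≥ 1`) is a strict
`ρ`-contraction (`ρ < 1`) for the natural distance `d` and `g`, `h` are
nonexpansive for `d`, then for every arrival probability `γ̄ ∈ (0,1)` the
Markov operator `T(ν) = γ̄·g_*ν + (1−γ̄)·h_*ν` on Borel probability measures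
on the positive definite matrices has a unique invariant probability measure,
and the iterates `T^k(ν)` converge weakly to it from any initial Borel
probability measure `ν`. -/
theorem lgb_stationary_distribution_exists
    {n : ℕ} (hn : 1 ≤ n) (A Q I : Matrix (Fin n) (Fin n) ℝ)
    (hA : IsUnit A.det) (hQ : Q.PosSemidef) (hI : I.PosSemidef)
    (m : ℕ) (hm : 1 ≤ m) (ρ : ℝ) (hρ₀ : 0 ≤ ρ) (hρ₁ : ρ < 1)
    (hcontr : ∀ P₁ P₂ : Matrix (Fin n) (Fin n) ℝ, P₁.PosDef → P₂.PosDef →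
      natDist ((riccatiG A Q I)^[m] P₁) ((riccatiG A Q I)^[m] P₂)
        ≤ ρ * natDist P₁ P₂)
    (hgne : ∀ P₁ P₂ : Matrix (Fin n) (Fin n) ℝ, P₁.PosDef → P₂.PosDef →
      natDist (riccatiG A Q I P₁) (riccatiG A Q I P₂) ≤ natDist P₁ P₂)
    (hhne : ∀ P₁ P₂ : Matrix (Fin n) (Fin n) ℝ, P₁.PosDef → P₂.PosDef →
      natDist (riccatiH A Q P₁) (riccatiH A Q P₂) ≤ natDist P₁ P₂)
    (γ : ℝ) (hγ : γ ∈ Set.Ioo (0 : ℝ) 1) :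
    ∃ μ : Measure (PDMatrix n), IsProbabilityMeasure μ ∧
      lgbMarkovOp A Q I hA hQ hI γ μ = μ ∧
      (∀ μ' : Measure (PDMatrix n), IsProbabilityMeasure μ' →
        lgbMarkovOp A Q I hA hQ hI γ μ' = μ' → μ' = μ) ∧
      (∀ ν : Measure (PDMatrix n), IsProbabilityMeasure ν →
        ∀ φ : BoundedContinuousFunction (PDMatrix n) ℝ,
          Tendsto
            (fun k : ℕ => ∫ x, φ x ∂((lgbMarkovOp A Q I hA hQ hI γ)^[k] ν))
            atTop (nhds (∫ x, φ x ∂μ))) := by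
  let mets : MetricSpace (PDMatrix n) := embedding_logQuad.comapMetricSpace logQuad
  have hdist : ∀ P R : PDMatrix n, dist P R = dist (logQuad P) (logQuad R) := fun _ _ => rfl
  have hdd : ∀ P R : PDMatrix n, dist P R ≤ natDist P.1 R.1 := by
    intro P R
    rw [hdist]
    refine (ContinuousMap.dist_le (Real.sqrt_nonneg _)).2 fun x => ?_
    exact log_quad_le_natDist P.2 R.2 (annul_ne x)
  have hproper : ProperSpace (PDMatrix n) := by
    refine ⟨fun P₀ r => ?_⟩
    by_cases hr : 0 ≤ r
    · have : Metric.closedBall P₀ r =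
          {P : PDMatrix n | ∀ x : annul n, |logQuad P x - logQuad P₀ x| ≤ r} := by
        ext P
        rw [Metric.mem_closedBall, hdist, ContinuousMap.dist_le hr]
        rfl
      rw [this]
      exact compact_ball P₀ r
    · rw [Metric.closedBall_eq_empty.2 (not_le.1 hr)]
      exact isCompact_empty
  have hit : ∀ (k : ℕ) (P : PDMatrix n),
      ((riccatiGPD A Q I hA hQ hI)^[k] P).1 = (riccatiG A Q I)^[k] P.1 := by
    intro k
    induction k with
    | zero => intro P; rfl
    | succ k ih => intro P; rw [Function.iterate_succ_apply, Function.iterate_succ_apply, ih]; rfl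
  exact ifs_main (X := PDMatrix n) ⟨1, Matrix.PosDef.one⟩
    (continuous_riccatiGPD A Q I hA hQ hI) (continuous_riccatiHPD A Q hA hQ)
    (d := fun P R => natDist P.1 R.1) hdd hγ
    (fun P R => hgne P.1 R.1 P.2 R.2) (fun P R => hhne P.1 R.1 P.2 R.2) hm hρ₀ hρ₁
    (fun P R => by simpa only [hit] using hcontr P.1 R.1 P.2 R.2)
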